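/- Let (h, h̃) be a pair of metrics on a nonempty open set U ⊆ ℝ^n and let E be a smooth vector field on U with L_E h = D·h and L_E h̃ = D̃·h̃ for smooth functions D, D̃; set λ = D̃ − D. Let ∘ be the multiplication on 1-forms associated to the pair (h, h̃). Then for all 1-forms u, v on U: L_E(∘)(u,v) = (1/2)·[h*(u, dλ)·v + h*(u,v)·dλ + h*(v, dD)·u − h̃*(v, dD̃)·h̃(h*u)] − D·(u∘v). -/

import Mathlib

open scoped BigOperators

noncomputable section

/-- Points of ℝⁿ. -/
abbrev Pt (n : ℕ) := Fin n → ℝ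
/-- Vector fields (globally defined functions; conditions are imposed on an open set). -/
abbrev VF (n : ℕ) := Pt n → Fin n → ℝ
/-- 1-forms. -/
abbrev OneForm (n : ℕ) := Pt n → Fin n → ℝ
/-- Metrics: smooth maps into symmetric invertible matrices. -/
abbrev Met (n : ℕ) := Pt n → Matrix (Fin n) (Fin n) ℝ
/-- (1,2)-tensor fields (multiplications on tangent vectors): components `c t k i j` = c^k_{ij}(t). -/
abbrev Mul2 (n : ℕ) := Pt n → Fin n → Fin n → Fin n → ℝ

variable {n : ℕ}

/-- Partial derivative ∂ᵢ f (t). -/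
def pder (i : Fin n) (f : Pt n → ℝ) (t : Pt n) : ℝ :=
  fderiv ℝ f t (Pi.single i 1)

/-- Smoothness (on `U`) of a vector field or a 1-form. -/
def SmoothVF (U : Set (Pt n)) (X : VF n) : Prop :=
  ∀ k, ContDiffOn ℝ (⊤ : ℕ∞) (fun t => X t k) U

def SmoothMet (U : Set (Pt n)) (g : Met n) : Prop :=
  ∀ i j, ContDiffOn ℝ (⊤ : ℕ∞) (fun t => g t i j) U

def SmoothMul2 (U : Set (Pt n)) (c : Mul2 n) : Prop :=
  ∀ k i j, ContDiffOn ℝ (⊤ : ℕ∞) (fun t => c t k i j) U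

/-- `g` is a (pseudo-Riemannian) metric on `U`: smooth, symmetric, invertible. -/
def IsMetricOn (U : Set (Pt n)) (g : Met n) : Prop :=
  SmoothMet U g ∧ ∀ t ∈ U, (g t).IsSymm ∧ IsUnit (g t)

/-- The 1-form g(X). -/
def mdown (g : Met n) (X : VF n) : OneForm n := fun t k => ∑ j, g t k j * X t j
/-- The vector field g*α. -/
def mup (g : Met n) (α : OneForm n) : VF n := fun t k => ∑ j, (g t)⁻¹ k j * α t j
/-- g*(α, β). -/
def mup2 (g : Met n) (α β : OneForm n) (t : Pt n) : ℝ :=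
  ∑ i, ∑ j, (g t)⁻¹ i j * α t i * β t j
/-- g(X, Y). -/
def mdown2 (g : Met n) (X Y : VF n) (t : Pt n) : ℝ :=
  ∑ i, ∑ j, g t i j * X t i * Y t j

/-- Christoffel symbols Γ(g)^k_{ij}(t). -/
def chr (g : Met n) (k i j : Fin n) (t : Pt n) : ℝ :=
  (1/2) * ∑ l, (g t)⁻¹ k l *
    (pder i (fun s => g s j l) t + pder j (fun s => g s i l) t - pder l (fun s => g s i j) t)

/-- Levi-Civita covariant derivative ∇^g_X Y of a vector field. -/
def covV (g : Met n) (X Y : VF n) : VF n :=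
  fun t k => ∑ i, X t i * (pder i (fun s => Y s k) t + ∑ m, chr g k i m t * Y t m)

/-- Levi-Civita covariant derivative ∇^g_X α of a 1-form. -/
def covF (g : Met n) (X : VF n) (α : OneForm n) : OneForm n :=
  fun t k => ∑ i, X t i * (pder i (fun s => α s k) t - ∑ m, chr g m i k t * α t m)

/-- Lie bracket [X, Y]. -/
def vbr (X Y : VF n) : VF n :=
  fun t k => ∑ i, (X t i * pder i (fun s => Y s k) t - Y t i * pder i (fun s => X s k) t)

/-- Curvature R(g)_{X,Y} Z = ∇_X ∇_Y Z − ∇_Y ∇_X Z − ∇_{[X,Y]} Z. -/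
def curvV (g : Met n) (X Y Z : VF n) : VF n :=
  fun t k => covV g X (covV g Y Z) t k - covV g Y (covV g X Z) t k
    - covV g (vbr X Y) Z t k

/-- Curvature acting on 1-forms: (R(g)_{X,Y} α)(Z) = −α(R(g)_{X,Y} Z). -/
def curvF (g : Met n) (X Y : VF n) (α : OneForm n) : OneForm n :=
  fun t k => - ∑ m, α t m * curvV g X Y (fun _ => Pi.single k 1) t m

/-- `g` is flat on `U`: the curvature tensor vanishes identically. -/
def FlatOn (U : Set (Pt n)) (g : Met n) : Prop :=
  ∀ X Y Z : VF n, SmoothVF U X → SmoothVF U Y → SmoothVF U Z →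
    ∀ t ∈ U, ∀ k, curvV g X Y Z t k = 0

/-- `g` has constant sectional curvature `s` on `U`. -/
def ConstSecCurv (U : Set (Pt n)) (g : Met n) (s : ℝ) : Prop :=
  ∀ X Y : VF n, SmoothVF U X → SmoothVF U Y → ∀ t ∈ U,
    mdown2 g (curvV g X Y Y) X t
      = s * (mdown2 g X X t * mdown2 g Y Y t - (mdown2 g X Y t) ^ 2)

/-- The metric g_λ of the pencil: its inverse matrix is g⁻¹ + λ g̃⁻¹. -/
def pencil (g g' : Met n) (lam : ℝ) : Met n :=
  fun t => ((g t)⁻¹ + lam • (g' t)⁻¹)⁻¹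

/-- Almost compatibility of the pair (g, g̃) on `U`. -/
def AlmostCompatible (U : Set (Pt n)) (g g' : Met n) : Prop :=
  ∀ lam : ℝ, (∀ t ∈ U, IsUnit ((g t)⁻¹ + lam • (g' t)⁻¹)) →
    ∀ X : VF n, SmoothVF U X → ∀ α : OneForm n, SmoothVF U α →
      ∀ t ∈ U, ∀ k,
        mup (pencil g g' lam) (covF (pencil g g' lam) X α) t k
          = mup g (covF g X α) t k + lam * mup g' (covF g' X α) t k

/-- Compatibility of the pair (g, g̃) on `U`. -/
def Compatible (U : Set (Pt n)) (g g' : Met n) : Prop :=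
  AlmostCompatible U g g' ∧
  ∀ lam : ℝ, (∀ t ∈ U, IsUnit ((g t)⁻¹ + lam • (g' t)⁻¹)) →
    ∀ X Y : VF n, SmoothVF U X → SmoothVF U Y →
      ∀ α : OneForm n, SmoothVF U α →
        ∀ t ∈ U, ∀ k,
          mup (pencil g g' lam) (curvF (pencil g g' lam) X Y α) t k
            = mup g (curvF g X Y α) t k + lam * mup g' (curvF g' X Y α) t k

/-- The multiplication α ∘ β = ∇^g_{g*α} β − ∇^{g̃}_{g*α} β on 1-forms. -/
def circM (g g' : Met n) (α β : OneForm n) : OneForm n :=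
  fun t k => covF g (mup g α) β t k - covF g' (mup g α) β t k

/-- The endomorphism T(u) = g(E) ∘ u of 1-forms, as a pointwise matrix
(`∘` being tensorial in its second argument). -/
def Tmat (g g' : Met n) (E : VF n) (t : Pt n) : Matrix (Fin n) (Fin n) ℝ :=
  Matrix.of fun k m => circM g g' (mdown g E) (fun _ => Pi.single m 1) t k

/-- The triple (g, g̃, E) is regular on `U` if T is invertible at every point. -/
def RegularTriple (U : Set (Pt n)) (g g' : Met n) (E : VF n) : Prop :=
  ∀ t ∈ U, IsUnit (Tmat g g' E t)

/-- T⁻¹(v). -/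
def TinvF (g g' : Met n) (E : VF n) (v : OneForm n) : OneForm n :=
  fun t k => ∑ m, (Tmat g g' E t)⁻¹ k m * v t m

/-- The multiplication u • v = u ∘ T⁻¹(v) on 1-forms. -/
def bulF (g g' : Met n) (E : VF n) (u v : OneForm n) : OneForm n :=
  circM g g' u (TinvF g g' E v)

/-- The multiplication • on vector fields: X • Y = g̃*((g̃X) • (g̃Y)). -/
def bulV (g g' : Met n) (E : VF n) (X Y : VF n) : VF n :=
  mup g' (bulF g g' E (mdown g' X) (mdown g' Y))

/-- The multiplication • associated to the regular triple (g, g̃, E), as a (1,2)-tensor. -/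
def bulMul (g g' : Met n) (E : VF n) : Mul2 n :=
  fun t k i j => bulV g g' E (fun _ => Pi.single i 1) (fun _ => Pi.single j 1) t k

/-- Applying a (1,2)-tensor to vector fields. -/
def mapp (c : Mul2 n) (X Y : VF n) : VF n :=
  fun t k => ∑ i, ∑ j, c t k i j * X t i * Y t j

/-- Transporting a multiplication on tangent vectors to a multiplication
on 1-forms via the metric: u • v := g̃((g̃*u) • (g̃*v)). -/
def formMul (g' : Met n) (c : Mul2 n) (u v : OneForm n) : OneForm n :=
  mdown g' (mapp c (mup g' u) (mup g' v))

/-- Lie derivative of a function. -/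
def lieFun (E : VF n) (φ : Pt n → ℝ) : Pt n → ℝ :=
  fun t => ∑ i, E t i * pder i φ t

/-- Lie derivative of a 1-form: (L_E α)(X) = E(α(X)) − α([E,X]). -/
def lieOne (E : VF n) (α : OneForm n) : OneForm n :=
  fun t k => (∑ i, E t i * pder i (fun s => α s k) t) + ∑ i, α t i * pder k (fun s => E s i) t

/-- Lie derivative of a metric: (L_E g)(X,Y) = E(g(X,Y)) − g([E,X],Y) − g(X,[E,Y]). -/
def lieMet (E : VF n) (g : Met n) : Met n := fun t =>
  Matrix.of fun k j =>
    (∑ i, E t i * pder i (fun s => g s k j) t)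
    + (∑ i, g t i j * pder k (fun s => E s i) t)
    + (∑ i, g t k i * pder j (fun s => E s i) t)

/-- Lie derivative of a multiplication ((1,2)-tensor):
(L_E c)(u,v) = L_E(c(u,v)) − c(L_E u, v) − c(u, L_E v), componentwise. -/
def lieMul (E : VF n) (c : Mul2 n) : Mul2 n :=
  fun t k i j =>
    vbr E (mapp c (fun _ => Pi.single i 1) (fun _ => Pi.single j 1)) t k
    - mapp c (vbr E (fun _ => Pi.single i 1)) (fun _ => Pi.single j 1) t k
    - mapp c (fun _ => Pi.single i 1) (vbr E (fun _ => Pi.single j 1)) t k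

/-- Lie derivative of a multiplication on 1-forms (applied to the pencil multiplication ∘). -/
def lieCirc (E : VF n) (g g' : Met n) (u v : OneForm n) : OneForm n :=
  fun t k => lieOne E (circM g g' u v) t k - circM g g' (lieOne E u) v t k
    - circM g g' u (lieOne E v) t k

/-- ∇^g_X(•)(Y,Z) := ∇^g_X(Y•Z) − (∇^g_X Y)•Z − Y•(∇^g_X Z), for a multiplication c. -/
def covMul (g : Met n) (c : Mul2 n) (X Y Z : VF n) : VF n :=
  fun t k => covV g X (mapp c Y Z) t k - mapp c (covV g X Y) Z t k
    - mapp c Y (covV g X Z) t k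

/-- The (4,0)-tensor ∇^g(•)(X,Y,Z,V) := g(∇^g_X(•)(Y,Z), V). -/
def covMul4 (g : Met n) (c : Mul2 n) (X Y Z V : VF n) (t : Pt n) : ℝ :=
  mdown2 g (covMul g c X Y Z) V t

/-- Total symmetry of the (4,0)-tensor ∇^g(•) (the F-manifold condition). -/
def TotSym (U : Set (Pt n)) (g : Met n) (c : Mul2 n) : Prop :=
  ∀ X Y Z V : VF n, SmoothVF U X → SmoothVF U Y → SmoothVF U Z → SmoothVF U V →
    ∀ t ∈ U,
      covMul4 g c X Y Z V t = covMul4 g c Y X Z V t ∧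
      covMul4 g c X Y Z V t = covMul4 g c X Z Y V t ∧
      covMul4 g c X Y Z V t = covMul4 g c X Y V Z t

/-- Weak F-manifold structure (U, •, g̃, E), with identity `e`, •-inverse `Einv` of E,
and rescaling functions `Dt` (for the metric) and `k` (for the multiplication). -/
structure IsWeakF (U : Set (Pt n)) (c : Mul2 n) (g' : Met n) (E e Einv : VF n)
    (Dt k : Pt n → ℝ) : Prop where
  met : IsMetricOn U g'
  smooth_c : SmoothMul2 U c
  smooth_E : SmoothVF U E
  smooth_e : SmoothVF U e
  smooth_Einv : SmoothVF U Einv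
  smooth_Dt : ContDiffOn ℝ (⊤ : ℕ∞) Dt U
  smooth_k : ContDiffOn ℝ (⊤ : ℕ∞) k U
  comm : ∀ t ∈ U, ∀ a i j, c t a i j = c t a j i
  assoc : ∀ t ∈ U, ∀ a x y z, (∑ m, c t a m z * c t m x y) = ∑ m, c t a x m * c t m y z
  unit : ∀ t ∈ U, ∀ a i, (∑ j, c t a j i * e t j) = if a = i then (1 : ℝ) else 0
  invar : ∀ t ∈ U, ∀ x y z, (∑ m, g' t m z * c t m x y) = ∑ m, g' t x m * c t m y z
  lie_g : ∀ t ∈ U, ∀ i j, lieMet E g' t i j = Dt t * g' t i j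
  lie_c : ∀ t ∈ U, ∀ a i j, lieMul E c t a i j = k t * c t a i j
  e_inv : ∀ t ∈ U, ∀ a, (∑ i, ∑ j, c t a i j * E t i * Einv t j) = e t a
  sym_E : ∀ Y Z V : VF n, SmoothVF U Y → SmoothVF U Z → SmoothVF U V → ∀ t ∈ U,
    covMul4 g' c E Y Z V t = covMul4 g' c Y E Z V t

/-- Weak quasi-homogeneous pencil (h, h̃) with Euler vector field E. -/
structure IsWQH (U : Set (Pt n)) (h h' : Met n) (E : VF n) (D Dt : Pt n → ℝ) : Prop where
  met_h : IsMetricOn U h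
  met_h' : IsMetricOn U h'
  compat : Compatible U h h'
  smooth_E : SmoothVF U E
  smooth_D : ContDiffOn ℝ (⊤ : ℕ∞) D U
  smooth_Dt : ContDiffOn ℝ (⊤ : ℕ∞) Dt U
  lie_h' : ∀ t ∈ U, ∀ i j, lieMet E h' t i j = Dt t * h' t i j
  cov_E : ∀ X : VF n, SmoothVF U X → ∀ t ∈ U, ∀ a, covV h X E t a = (D t / 2) * X t a
  diff_const : ∃ c₀ : ℝ, ∀ t ∈ U, Dt t - D t = c₀

/-- Frobenius manifold structure (U, •, g̃, E). -/
structure IsFrob (U : Set (Pt n)) (c : Mul2 n) (g' : Met n) (E e : VF n) (D k : ℝ) : Prop where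
  met : IsMetricOn U g'
  flat : FlatOn U g'
  smooth_c : SmoothMul2 U c
  smooth_E : SmoothVF U E
  smooth_e : SmoothVF U e
  comm : ∀ t ∈ U, ∀ a i j, c t a i j = c t a j i
  assoc : ∀ t ∈ U, ∀ a x y z, (∑ m, c t a m z * c t m x y) = ∑ m, c t a x m * c t m y z
  unit : ∀ t ∈ U, ∀ a i, (∑ j, c t a j i * e t j) = if a = i then (1 : ℝ) else 0
  invar : ∀ t ∈ U, ∀ x y z, (∑ m, g' t m z * c t m x y) = ∑ m, g' t x m * c t m y z
  e_par : ∀ X : VF n, SmoothVF U X → ∀ t ∈ U, ∀ a, covV g' X e t a = 0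
  tot_sym : TotSym U g' c
  nabla2E : ∀ X Y : VF n, SmoothVF U X → SmoothVF U Y → ∀ t ∈ U, ∀ a,
    covV g' X (covV g' Y E) t a - covV g' (covV g' X Y) E t a = 0
  lie_g : ∀ t ∈ U, ∀ i j, lieMet E g' t i j = D * g' t i j
  lie_c : ∀ t ∈ U, ∀ a i j, lieMul E c t a i j = k * c t a i j

/-- The intersection metric `g` of a Frobenius manifold: g*g̃ = E•, together with
its standard properties. -/
structure IsIntersection (U : Set (Pt n)) (c : Mul2 n) (g g' : Met n) (E : VF n)
    (d : ℝ) : Prop where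
  met : IsMetricOn U g
  defn : ∀ t ∈ U, ∀ a j, (∑ l, (g t)⁻¹ a l * g' t l j) = ∑ i, c t a i j * E t i
  lie_g : ∀ t ∈ U, ∀ i j, lieMet E g t i j = (1 - d) * g t i j
  compat : Compatible U g g'
  regular : RegularTriple U g g' E
  mul_eq : ∀ t ∈ U, ∀ a i j, bulMul g g' E t a i j = c t a i j

/-!
The Lie derivative `L_E ∇` of the Levi-Civita connection of a metric `g` is a symmetric tensor, and
applying `L_E` to `∇g = 0` when `L_E g = D g` gives
`g((L_E ∇)_W Y, Z) + g(Y, (L_E ∇)_W Z) = dD(W) g(Y, Z)`. Koszul's polarization therefore expresses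
`L_E ∇` through `dD` and `g`. Since moreover `[E, g*u] = g*(L_E u) - D g*u`, the Leibniz rule yields
`(L_E ∘)(u, v) = (L_E ∇^h - L_E ∇^h̃)_{h*u} v - D (u ∘ v)`.
-/

section

open Matrix VectorField
open scoped Matrix.Norms.Operator Topology

section SecondDerivative

variable {V F : Type*} [NormedAddCommGroup V] [NormedSpace ℝ V] [NormedAddCommGroup F]
  [NormedSpace ℝ F] {f : V → F} {X : V → V} {t : V}

theorem differentiableAt_fderiv (hf : ContDiffAt ℝ 2 f t) : DifferentiableAt ℝ (fderiv ℝ f) t :=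
  (hf.fderiv_right (m := 1) (by norm_num)).differentiableAt one_ne_zero

theorem fderiv_fderiv_apply (hf : ContDiffAt ℝ 2 f t) (hX : DifferentiableAt ℝ X t) (e : V) :
    fderiv ℝ (fun s => fderiv ℝ f s (X s)) t e
      = fderiv ℝ (fderiv ℝ f) t e (X t) + fderiv ℝ f t (fderiv ℝ X t e) := by
  rw [fderiv_clm_apply (differentiableAt_fderiv hf) hX]
  simp [add_comm]

theorem fderiv_fderiv_apply_const (hf : ContDiffAt ℝ 2 f t) (hX : DifferentiableAt ℝ X t) (w : V) :
    fderiv ℝ (fun s => fderiv ℝ f s w) t (X t)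
      = fderiv ℝ (fun s => fderiv ℝ f s (X s)) t w - fderiv ℝ f t (fderiv ℝ X t w) := by
  rw [fderiv_fderiv_apply hf hX, fderiv_fderiv_apply hf (differentiableAt_const w),
    (hf.isSymmSndFDerivAt (by simp)).eq (X t) w]
  simp

end SecondDerivative

section MatrixCalculus

variable {V : Type*} [NormedAddCommGroup V] [NormedSpace ℝ V] {l m : Type*} {t : V}

theorem contDiffAt_matrix [Fintype l] [Fintype m] {A : V → Matrix l m ℝ} {k : WithTop ℕ∞}
    (hA : ∀ i j, ContDiffAt ℝ k (fun s => A s i j) t) : ContDiffAt ℝ k A t := by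
  classical
  have hsum : A = fun s => ∑ i, ∑ j, A s i j • Matrix.single i j (1 : ℝ) := by
    funext s
    simpa using matrix_eq_sum_single (A s)
  rw [hsum]
  exact ContDiffAt.sum fun i _ => ContDiffAt.sum fun j _ => (hA i j).smul contDiffAt_const

theorem contDiffAt_matrix_entry [Fintype l] [Fintype m] {A : V → Matrix l m ℝ} {k : WithTop ℕ∞}
    (hA : ContDiffAt ℝ k A t) (i : l) (j : m) : ContDiffAt ℝ k (fun s => A s i j) t :=
  (LinearMap.toContinuousLinearMap (entryLinearMap ℝ ℝ i j)).contDiff.contDiffAt.comp t hA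

variable {A B : V → Matrix l m ℝ}

section Finite

variable [Finite l] [Finite m]

theorem fderiv_matrix_entry (hA : DifferentiableAt ℝ A t) (i : l) (j : m) (w : V) :
    fderiv ℝ A t w i j = fderiv ℝ (fun s => A s i j) t w := by
  have := Fintype.ofFinite l
  have := Fintype.ofFinite m
  exact (congrArg (· w) ((LinearMap.toContinuousLinearMap
    (entryLinearMap ℝ ℝ i j)).hasFDerivAt.comp t hA.hasFDerivAt).fderiv).symm

theorem hasFDerivAt_matrix_transpose (hA : DifferentiableAt ℝ A t) :
    HasFDerivAt (fun s => (A s)ᵀ) ((LinearMap.toContinuousLinearMap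
      (transposeLinearEquiv l m ℝ ℝ).toLinearMap).comp (fderiv ℝ A t)) t := by
  have := Fintype.ofFinite l
  have := Fintype.ofFinite m
  exact (LinearMap.toContinuousLinearMap
    (transposeLinearEquiv l m ℝ ℝ).toLinearMap).hasFDerivAt.comp t hA.hasFDerivAt

theorem fderiv_matrix_transpose (hA : DifferentiableAt ℝ A t) (w : V) :
    fderiv ℝ (fun s => (A s)ᵀ) t w = (fderiv ℝ A t w)ᵀ := by
  have := Fintype.ofFinite l
  have := Fintype.ofFinite m
  exact congrArg (· w) (hasFDerivAt_matrix_transpose hA).fderiv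

theorem fderiv_matrix_add (hA : DifferentiableAt ℝ A t) (hB : DifferentiableAt ℝ B t) (w : V) :
    fderiv ℝ (fun s => A s + B s) t w = fderiv ℝ A t w + fderiv ℝ B t w := by
  have := Fintype.ofFinite l
  have := Fintype.ofFinite m
  exact congrArg (· w) (fderiv_fun_add hA hB)

theorem fderiv_matrix_sub (hA : DifferentiableAt ℝ A t) (hB : DifferentiableAt ℝ B t) (w : V) :
    fderiv ℝ (fun s => A s - B s) t w = fderiv ℝ A t w - fderiv ℝ B t w := by
  have := Fintype.ofFinite l
  have := Fintype.ofFinite m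
  exact congrArg (· w) (fderiv_fun_sub hA hB)

theorem fderiv_matrix_smul {f : V → ℝ} (hf : DifferentiableAt ℝ f t) (hA : DifferentiableAt ℝ A t)
    (w : V) :
    fderiv ℝ (fun s => f s • A s) t w = fderiv ℝ f t w • A t + f t • fderiv ℝ A t w := by
  have := Fintype.ofFinite l
  have := Fintype.ofFinite m
  exact (congrArg (· w) (fderiv_fun_smul hf hA)).trans (add_comm _ _)

end Finite

theorem fderiv_mulVec [Finite l] [Fintype m] {x : V → m → ℝ} (hA : DifferentiableAt ℝ A t)
    (hx : DifferentiableAt ℝ x t) (w : V) :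
    fderiv ℝ (fun s => A s *ᵥ x s) t w = fderiv ℝ A t w *ᵥ x t + A t *ᵥ fderiv ℝ x t w := by
  have := Fintype.ofFinite l
  exact (congrArg (· w)
    ((mulVecBilin ℝ ℝ).toContinuousBilinearMap.fderiv_of_bilinear hA hx)).trans (add_comm _ _)

theorem fderiv_vecMul [Fintype l] [Finite m] {x : V → l → ℝ} (hx : DifferentiableAt ℝ x t)
    (hA : DifferentiableAt ℝ A t) (w : V) :
    fderiv ℝ (fun s => x s ᵥ* A s) t w = fderiv ℝ x t w ᵥ* A t + x t ᵥ* fderiv ℝ A t w := by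
  have := Fintype.ofFinite m
  exact (congrArg (· w)
    ((vecMulBilin ℝ ℝ).toContinuousBilinearMap.fderiv_of_bilinear hx hA)).trans (add_comm _ _)

theorem differentiableAt_mulVec [Finite l] [Fintype m] {x : V → m → ℝ}
    (hA : DifferentiableAt ℝ A t) (hx : DifferentiableAt ℝ x t) :
    DifferentiableAt ℝ (fun s => A s *ᵥ x s) t := by
  have := Fintype.ofFinite l
  exact ((mulVecBilin (m := l) (n := m) (A := ℝ) ℝ
    ℝ).toContinuousBilinearMap.hasFDerivAt_of_bilinear
    hA.hasFDerivAt hx.hasFDerivAt).differentiableAt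

theorem differentiableAt_vecMul [Fintype l] [Finite m] {x : V → l → ℝ}
    (hx : DifferentiableAt ℝ x t) (hA : DifferentiableAt ℝ A t) :
    DifferentiableAt ℝ (fun s => x s ᵥ* A s) t := by
  have := Fintype.ofFinite m
  exact ((vecMulBilin (m := l) (n := m) (A := ℝ) ℝ
    ℝ).toContinuousBilinearMap.hasFDerivAt_of_bilinear
    hx.hasFDerivAt hA.hasFDerivAt).differentiableAt

end MatrixCalculus

section SquareMatrixCalculus

variable {V : Type*} [NormedAddCommGroup V] [NormedSpace ℝ V] {l : Type*} [Fintype l]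
  {A B : V → Matrix l l ℝ} {t : V}

theorem fderiv_matrix_mul (hA : DifferentiableAt ℝ A t) (hB : DifferentiableAt ℝ B t) (w : V) :
    fderiv ℝ (fun s => A s * B s) t w = fderiv ℝ A t w * B t + A t * fderiv ℝ B t w := by
  classical
  exact (congrArg (· w)
    ((LinearMap.mul ℝ (Matrix l l ℝ)).toContinuousBilinearMap.fderiv_of_bilinear hA hB)).trans
    (add_comm _ _)

theorem differentiableAt_transpose_mul_add_mul (hA : DifferentiableAt ℝ A t)
    (hB : DifferentiableAt ℝ B t) : DifferentiableAt ℝ (fun s => (A s)ᵀ * B s + B s * A s) t := by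
  classical
  exact ((hasFDerivAt_matrix_transpose hA).differentiableAt.mul hB).add (hB.mul hA)

theorem fderiv_transpose_mul_add_mul (hA : DifferentiableAt ℝ A t) (hB : DifferentiableAt ℝ B t)
    (w : V) : fderiv ℝ (fun s => (A s)ᵀ * B s + B s * A s) t w
      = (fderiv ℝ A t w)ᵀ * B t + (A t)ᵀ * fderiv ℝ B t w
        + (fderiv ℝ B t w * A t + B t * fderiv ℝ A t w) := by
  classical
  have hAT := (hasFDerivAt_matrix_transpose hA).differentiableAt
  rw [fderiv_matrix_add (hAT.fun_mul hB) (hB.fun_mul hA), fderiv_matrix_mul hAT hB,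
    fderiv_matrix_mul hB hA, fderiv_matrix_transpose hA]

theorem differentiableAt_matrix_inv [DecidableEq l] (hA : DifferentiableAt ℝ A t)
    (ht : IsUnit (A t)) : DifferentiableAt ℝ (fun s => (A s)⁻¹) t := by
  simp only [nonsing_inv_eq_ringInverse]
  exact hA.inverse ht

end SquareMatrixCalculus

section FrechetDerivativeFormulas

variable {E X : VF n} {α : OneForm n} {g : Met n} {t : Pt n}

theorem sum_mul_pder (f : Pt n → ℝ) (t w : Pt n) : ∑ i, w i * pder i f t = fderiv ℝ f t w := by
  conv_rhs => rw [pi_eq_sum_univ' w, map_sum]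
  simp [pder]

theorem sum_mul_pder_apply (hX : DifferentiableAt ℝ X t) (w : Pt n) (k : Fin n) :
    ∑ i, w i * pder i (fun s => X s k) t = fderiv ℝ X t w k := by
  rw [sum_mul_pder, fderiv_pi (differentiableAt_pi.1 hX), ContinuousLinearMap.pi_apply]

/-- The Jacobian matrix of a vector field. -/
def jac (E : VF n) (t : Pt n) : Matrix (Fin n) (Fin n) ℝ :=
  LinearMap.toMatrix' (fderiv ℝ E t).toLinearMap

theorem jac_mulVec (E : VF n) (t w : Pt n) : jac E t *ᵥ w = fderiv ℝ E t w :=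
  LinearMap.toMatrix'_mulVec _ _

theorem jac_apply (hE : DifferentiableAt ℝ E t) (k i : Fin n) :
    jac E t k i = pder i (fun s => E s k) t := by
  rw [pder, ← ContinuousLinearMap.pi_apply (fun k => fderiv ℝ (fun s => E s k) t),
    ← fderiv_pi (differentiableAt_pi.1 hE)]
  exact LinearMap.toMatrix'_apply _ _ _

theorem differentiableAt_jac (hE : ContDiffAt ℝ 2 E t) : DifferentiableAt ℝ (jac E) t := by
  exact ((LinearMap.toContinuousLinearMap
    (LinearMap.toMatrix'.toLinearMap ∘ₗ ContinuousLinearMap.coeLM ℝ)).differentiableAt).comp t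
    (differentiableAt_fderiv hE)

theorem lieOne_eq (hE : DifferentiableAt ℝ E t) (hα : DifferentiableAt ℝ α t) :
    lieOne E α t = fderiv ℝ α t (E t) + α t ᵥ* jac E t := by
  ext k
  simp [lieOne, sum_mul_pder_apply hα, vecMul, dotProduct, jac_apply hE]

theorem vbr_eq_lieBracket (hE : DifferentiableAt ℝ E t) (hX : DifferentiableAt ℝ X t) :
    vbr E X t = lieBracket ℝ E X t := by
  ext k
  simp only [vbr, Finset.sum_sub_distrib, sum_mul_pder_apply hX, sum_mul_pder_apply hE,
    lieBracket, Pi.sub_apply]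

theorem lieMet_eq (hE : DifferentiableAt ℝ E t) (hg : DifferentiableAt ℝ g t) :
    lieMet E g t = fderiv ℝ g t (E t) + (jac E t)ᵀ * g t + g t * jac E t := by
  ext k j
  simp [lieMet, sum_mul_pder, fderiv_matrix_entry hg, mul_apply, jac_apply hE, mul_comm]

theorem mdown_eq (g : Met n) (X : VF n) (t : Pt n) : mdown g X t = g t *ᵥ X t := rfl

theorem mup_eq (g : Met n) (α : OneForm n) (t : Pt n) : mup g α t = (g t)⁻¹ *ᵥ α t := rfl

theorem mup2_eq (g : Met n) (α β : OneForm n) (t : Pt n) :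
    mup2 g α β t = α t ⬝ᵥ mup g β t := by
  simp only [mup2, mup, dotProduct, Finset.mul_sum]
  exact Finset.sum_congr rfl fun _ _ => Finset.sum_congr rfl fun _ _ => by ring

/-- The connection matrix of the Levi-Civita connection of `g` at `t` in the direction `w`: its
`(m, k)` entry is `∑ᵢ wⁱ Γᵐᵢₖ`, so that `∇_w X = ∂_w X + conn g t w *ᵥ X`. -/
def conn (g : Met n) (t : Pt n) : Pt n →ₗ[ℝ] Matrix (Fin n) (Fin n) ℝ :=
  Fintype.linearCombination ℝ fun i => of fun m k => chr g m i k t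

theorem covF_eq (hα : DifferentiableAt ℝ α t) :
    covF g X α t = fderiv ℝ α t (X t) - α t ᵥ* conn g t (X t) := by
  ext k
  simp only [covF, mul_sub, Finset.sum_sub_distrib, sum_mul_pder_apply hα, Pi.sub_apply, vecMul,
    dotProduct, conn, Fintype.linearCombination_apply, Matrix.sum_apply, Matrix.smul_apply,
    of_apply, Finset.mul_sum, smul_eq_mul]
  rw [Finset.sum_comm]
  congr! 3
  ring

end FrechetDerivativeFormulas

/-- The pointwise hypotheses on a metric `g` near `t` under which `g` has a differentiable
Levi-Civita connection there. -/
structure IsMetricGerm (g : Met n) (t : Pt n) : Prop where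
  contDiffAt : ContDiffAt ℝ 2 g t
  symm : ∀ᶠ s in 𝓝 t, (g s).IsSymm
  isUnit : IsUnit (g t)

theorem IsMetricOn.germ {U : Set (Pt n)} {g : Met n} {t : Pt n} (hg : IsMetricOn U g)
    (hU : U ∈ 𝓝 t) : IsMetricGerm g t where
  contDiffAt := contDiffAt_matrix fun i j =>
    ((hg.1 i j).contDiffAt hU).of_le (WithTop.coe_le_coe.2 le_top)
  symm := Filter.eventually_of_mem hU fun s hs => (hg.2 s hs).1
  isUnit := (hg.2 t (mem_of_mem_nhds hU)).2

/-- The Christoffel symbols of the first kind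
`g(∇_i ∂_k, ∂_l) = (∂_i g_kl + ∂_k g_il - ∂_l g_ik) / 2`, as a matrix with row index `l` and column
index `k`. -/
def christoffelFirst (g : Met n) (i : Fin n) (t : Pt n) : Matrix (Fin n) (Fin n) ℝ :=
  of fun l k => (1 / 2) *
    (pder i (fun s => g s k l) t + pder k (fun s => g s i l) t - pder l (fun s => g s i k) t)

theorem conn_apply (g : Met n) (t w : Pt n) :
    conn g t w = ∑ i, w i • ((g t)⁻¹ * christoffelFirst g i t) := by
  refine (Fintype.linearCombination_apply ..).trans (Finset.sum_congr rfl fun i _ => ?_)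
  congr 1
  ext m k
  simp only [of_apply, chr, christoffelFirst, mul_apply, Finset.mul_sum]
  exact Finset.sum_congr rfl fun _ _ => by ring

namespace IsMetricGerm

variable {g : Met n} {t : Pt n}

theorem differentiableAt (hg : IsMetricGerm g t) : DifferentiableAt ℝ g t :=
  hg.contDiffAt.differentiableAt two_ne_zero

theorem isSymm (hg : IsMetricGerm g t) : (g t).IsSymm :=
  hg.symm.self_of_nhds

theorem eventually (hg : IsMetricGerm g t) : ∀ᶠ s in 𝓝 t, IsMetricGerm g s := by
  filter_upwards [hg.contDiffAt.eventually (by simp), eventually_eventually_nhds.2 hg.symm,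
    hg.contDiffAt.continuousAt.eventually_mem (Units.isOpen.mem_nhds hg.isUnit)]
    with s hd hs hu using ⟨hd, hs, hu⟩

theorem inv_mul (hg : IsMetricGerm g t) : (g t)⁻¹ * g t = 1 :=
  nonsing_inv_mul _ ((isUnit_iff_isUnit_det _).1 hg.isUnit)

theorem mul_inv (hg : IsMetricGerm g t) : g t * (g t)⁻¹ = 1 :=
  mul_nonsing_inv _ ((isUnit_iff_isUnit_det _).1 hg.isUnit)

theorem mdown_mup (hg : IsMetricGerm g t) (α : OneForm n) : mdown g (mup g α) t = α t := by
  rw [mdown_eq, mup_eq, mulVec_mulVec, hg.mul_inv, one_mulVec]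

theorem differentiableAt_mup (hg : IsMetricGerm g t) {α : OneForm n}
    (hα : DifferentiableAt ℝ α t) : DifferentiableAt ℝ (mup g α) t :=
  differentiableAt_mulVec (differentiableAt_matrix_inv hg.differentiableAt hg.isUnit) hα

theorem mup2_comm (hg : IsMetricGerm g t) (α β : OneForm n) : mup2 g α β t = mup2 g β α t := by
  rw [mup2_eq, mup2_eq, mup_eq, mup_eq, dotProduct_mulVec, ← mulVec_transpose,
    transpose_nonsing_inv, hg.isSymm.eq, dotProduct_comm]

theorem pder_symm (hg : IsMetricGerm g t) (i k l : Fin n) :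
    pder i (fun s => g s k l) t = pder i (fun s => g s l k) t :=
  DFunLike.congr_fun
    (Filter.EventuallyEq.fderiv_eq (hg.symm.mono fun _ hs => hs.apply l k)) (Pi.single i 1)

theorem conn_mulVec_comm (hg : IsMetricGerm g t) (w z : Pt n) :
    conn g t w *ᵥ z = conn g t z *ᵥ w := by
  have hchr : ∀ m i k, chr g m i k t = chr g m k i t := fun m i k => by
    simp only [chr, hg.pder_symm _ i k]
    congr! 3
    ring
  ext m
  simp only [conn, Fintype.linearCombination_apply, mulVec, dotProduct, Matrix.sum_apply,
    Matrix.smul_apply, of_apply, Finset.sum_mul, smul_eq_mul]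
  rw [Finset.sum_comm]
  exact Finset.sum_congr rfl fun i _ => Finset.sum_congr rfl fun k _ => by rw [hchr m k i]; ring

theorem christoffelFirst_transpose_add (hg : IsMetricGerm g t) (i : Fin n) :
    (christoffelFirst g i t)ᵀ + christoffelFirst g i t = fderiv ℝ g t (Pi.single i 1) := by
  ext l k
  rw [fderiv_matrix_entry hg.differentiableAt]
  change _ = pder i (fun s => g s l k) t
  simp only [christoffelFirst, Matrix.add_apply, transpose_apply, of_apply, hg.pder_symm i k l]
  ring

theorem fderiv_eq_conn (hg : IsMetricGerm g t) (w : Pt n) :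
    fderiv ℝ g t w = (conn g t w)ᵀ * g t + g t * conn g t w := by
  have hlow : g t * conn g t w = ∑ i, w i • christoffelFirst g i t := by
    simp only [conn_apply, Finset.mul_sum, Matrix.mul_smul, ← Matrix.mul_assoc, hg.mul_inv,
      Matrix.one_mul]
  have hlowT : (conn g t w)ᵀ * g t = (∑ i, w i • christoffelFirst g i t)ᵀ := by
    rw [← hlow, transpose_mul, hg.isSymm.eq]
  rw [hlow, hlowT, transpose_sum, ← Finset.sum_add_distrib]
  conv_lhs => rw [pi_eq_sum_univ' w, map_sum]
  simp only [transpose_smul, ← smul_add, hg.christoffelFirst_transpose_add, map_smul]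

theorem differentiableAt_christoffelFirst (hg : IsMetricGerm g t) (i : Fin n) :
    DifferentiableAt ℝ (christoffelFirst g i) t := by
  have hpder : ∀ i k l, ContDiffAt ℝ 1 (pder i fun s => g s k l) t := fun i k l =>
    ((contDiffAt_matrix_entry hg.contDiffAt k l).fderiv_right (by norm_num)).clm_apply
      contDiffAt_const
  refine (contDiffAt_matrix (k := 1) fun l k => ?_).differentiableAt one_ne_zero
  exact contDiffAt_const.mul (((hpder i k l).add (hpder k i l)).sub (hpder l i k))

theorem differentiableAt_inv_mul_christoffelFirst (hg : IsMetricGerm g t) (i : Fin n) :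
    DifferentiableAt ℝ (fun s => (g s)⁻¹ * christoffelFirst g i s) t :=
  (differentiableAt_matrix_inv hg.differentiableAt hg.isUnit).mul
    (hg.differentiableAt_christoffelFirst i)

theorem differentiableAt_conn (hg : IsMetricGerm g t) {X : VF n} (hX : DifferentiableAt ℝ X t) :
    DifferentiableAt ℝ (fun s => conn g s (X s)) t := by
  simp only [conn_apply]
  exact DifferentiableAt.fun_sum fun i _ => (differentiableAt_pi.1 hX i).smul
    (hg.differentiableAt_inv_mul_christoffelFirst i)

theorem fderiv_conn_apply (hg : IsMetricGerm g t) {X : VF n} (hX : DifferentiableAt ℝ X t)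
    (e : Pt n) : fderiv ℝ (fun s => conn g s (X s)) t e
      = fderiv ℝ (fun s => conn g s (X t)) t e + conn g t (fderiv ℝ X t e) := by
  have hsum : ∀ Y : VF n, DifferentiableAt ℝ Y t → fderiv ℝ (fun s => conn g s (Y s)) t e
      = conn g t (fderiv ℝ Y t e)
        + ∑ i, Y t i • fderiv ℝ (fun s => (g s)⁻¹ * christoffelFirst g i s) t e := fun Y hY => by
    have hYi := differentiableAt_pi.1 hY
    have hC := hg.differentiableAt_inv_mul_christoffelFirst
    simp only [conn_apply, fderiv_pi hYi, ContinuousLinearMap.pi_apply, ← Finset.sum_add_distrib]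
    rw [← Finset.sum_congr rfl fun i _ => fderiv_matrix_smul (hYi i) (hC i) e]
    exact (congrArg (· e) (fderiv_fun_sum fun i _ => (hYi i).smul (hC i))).trans
      (_root_.sum_apply ..)
  rw [hsum X hX, hsum _ (differentiableAt_const _), add_comm]
  simp

end IsMetricGerm

/-- The Lie derivative `L_E ∇` of the Levi-Civita connection of `g`, a `(1,2)`-tensor: the matrix of
`Z ↦ (L_E ∇)_w Z` at `t`. The last summand, involving the second derivatives of `E`, is there
because the Christoffel symbols are not the components of a tensor. -/
def lieConn (E : VF n) (g : Met n) (t w : Pt n) : Matrix (Fin n) (Fin n) ℝ :=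
  fderiv ℝ (fun s => conn g s w) t (E t) + conn g t (jac E t *ᵥ w)
    + (conn g t w * jac E t - jac E t * conn g t w) + fderiv ℝ (jac E) t w

section LieConn

variable {E : VF n} {g : Met n} {t : Pt n}

theorem fderiv_jac_mulVec_comm (hE : ContDiffAt ℝ 2 E t) (w z : Pt n) :
    fderiv ℝ (jac E) t w *ᵥ z = fderiv ℝ (jac E) t z *ᵥ w := by
  have hjac : ∀ w z, fderiv ℝ (jac E) t w *ᵥ z = fderiv ℝ (fderiv ℝ E) t w z := fun w z => by
    have h := fderiv_mulVec (differentiableAt_jac hE) (differentiableAt_const z) w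
    simp only [jac_mulVec, fderiv_fderiv_apply hE (differentiableAt_const z)] at h
    simpa using h.symm
  rw [hjac, hjac]
  exact (hE.isSymmSndFDerivAt (by simp)).eq w z

theorem lieConn_mulVec_comm (hg : IsMetricGerm g t) (hE : ContDiffAt ℝ 2 E t) (w z : Pt n) :
    lieConn E g t w *ᵥ z = lieConn E g t z *ᵥ w := by
  have hconn : fderiv ℝ (fun s => conn g s w) t (E t) *ᵥ z
      = fderiv ℝ (fun s => conn g s z) t (E t) *ᵥ w := by
    have hmulVec : ∀ w z : Pt n, fderiv ℝ (fun s => conn g s w *ᵥ z) t (E t)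
        = fderiv ℝ (fun s => conn g s w) t (E t) *ᵥ z := fun w z => by
      rw [fderiv_mulVec (hg.differentiableAt_conn (differentiableAt_const w))
        (differentiableAt_const z)]
      simp
    rw [← hmulVec, ← hmulVec, Filter.EventuallyEq.fderiv_eq
      (hg.eventually.mono fun s hs => hs.conn_mulVec_comm w z)]
  simp only [lieConn, add_mulVec, sub_mulVec, ← mulVec_mulVec, hconn,
    fderiv_jac_mulVec_comm hE w z, hg.conn_mulVec_comm (jac E t *ᵥ _) _,
    hg.conn_mulVec_comm w z]
  abel

theorem transpose_lieConn_mul_add_mul_lieConn {D : Pt n → ℝ} (hg : IsMetricGerm g t)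
    (hE : ContDiffAt ℝ 2 E t) (hD : DifferentiableAt ℝ D t)
    (hconf : ∀ᶠ s in 𝓝 t, lieMet E g s = D s • g s) (w : Pt n) :
    (lieConn E g t w)ᵀ * g t + g t * lieConn E g t w = fderiv ℝ D t w • g t := by
  have hgd := hg.differentiableAt
  have hJ := differentiableAt_jac hE
  have hC := hg.differentiableAt_conn (differentiableAt_const w)
  have hw : (fun s => fderiv ℝ g s w) =ᶠ[𝓝 t] fun s => (conn g s w)ᵀ * g s + g s * conn g s w :=
    hg.eventually.mono fun s hs => hs.fderiv_eq_conn w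
  have hEg : (fun s => fderiv ℝ g s (E s)) =ᶠ[𝓝 t]
      fun s => D s • g s - ((jac E s)ᵀ * g s + g s * jac E s) := by
    filter_upwards [hconf, hg.eventually, hE.eventually (by simp)] with s hs hgs hEs
    rw [← hs, lieMet_eq (hEs.differentiableAt two_ne_zero) hgs.differentiableAt]
    abel
  have hEgt : fderiv ℝ g t (E t) = D t • g t - ((jac E t)ᵀ * g t + g t * jac E t) :=
    hEg.self_of_nhds
  have key : fderiv ℝ (fun s => (conn g s w)ᵀ * g s + g s * conn g s w) t (E t)
      = fderiv ℝ (fun s => D s • g s - ((jac E s)ᵀ * g s + g s * jac E s)) t w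
        - fderiv ℝ g t (jac E t *ᵥ w) := by
    rw [jac_mulVec]
    exact (DFunLike.congr_fun hw.fderiv_eq _).symm.trans
      ((fderiv_fderiv_apply_const hg.contDiffAt (hE.differentiableAt two_ne_zero) w).trans
        (congrArg (· - _) (DFunLike.congr_fun hEg.fderiv_eq w)))
  rw [fderiv_transpose_mul_add_mul hC hgd,
    fderiv_matrix_sub (hD.fun_smul hgd) (differentiableAt_transpose_mul_add_mul hJ hgd),
    fderiv_matrix_smul hD hgd, fderiv_transpose_mul_add_mul hJ hgd, hEgt,
    hg.fderiv_eq_conn w, hg.fderiv_eq_conn (jac E t *ᵥ w)] at key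
  rw [← sub_eq_zero] at key ⊢
  rw [← key]
  simp only [lieConn, transpose_add, transpose_sub, transpose_mul]
  simp only [add_mul, mul_add, sub_mul, mul_sub, smul_mul_assoc, mul_smul_comm, smul_add,
    ← Matrix.mul_assoc]
  abel

end LieConn

theorem vecMul_eq_of_transpose_mul_add_mul {K m : Type*} [Field K] [NeZero (2 : K)] [Fintype m]
    [DecidableEq m] {G : Matrix m m K} (hG : G.IsSymm) (hGu : IsUnit G) {b : m → K}
    {S : (m → K) → Matrix m m K} (hsymm : ∀ w z, S w *ᵥ z = S z *ᵥ w)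
    (hcompat : ∀ w, (S w)ᵀ * G + G * S w = (b ⬝ᵥ w) • G) (α w : m → K) :
    α ᵥ* S w = (1 / 2 : K) •
      ((b ⬝ᵥ w) • α + (α ⬝ᵥ w) • b - (b ⬝ᵥ G⁻¹ *ᵥ α) • (G *ᵥ w)) := by
  set β := G⁻¹ *ᵥ α
  have hβ : G *ᵥ β = α := by
    rw [mulVec_mulVec, mul_nonsing_inv _ ((isUnit_iff_isUnit_det _).1 hGu), one_mulVec]
  have hGcomm : ∀ x y, x ⬝ᵥ G *ᵥ y = y ⬝ᵥ G *ᵥ x := fun x y => by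
    rw [dotProduct_mulVec, ← mulVec_transpose, hG.eq, dotProduct_comm]
  have hT : ∀ x y z, z ⬝ᵥ G *ᵥ (S x *ᵥ y) + y ⬝ᵥ G *ᵥ (S x *ᵥ z) = (b ⬝ᵥ x) * (z ⬝ᵥ G *ᵥ y) := by
    intro x y z
    have h := congrArg (z ⬝ᵥ · *ᵥ y) (hcompat x)
    simp only [add_mulVec, dotProduct_add, ← mulVec_mulVec, smul_mulVec, dotProduct_smul,
      smul_eq_mul] at h
    rw [← h, add_comm, dotProduct_mulVec z (S x)ᵀ, vecMul_transpose, hGcomm y, dotProduct_comm,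
      dotProduct_comm]
  suffices h : ∀ z, (α ᵥ* S w) ⬝ᵥ z = (1 / 2 : K) *
      ((b ⬝ᵥ w) * (α ⬝ᵥ z) + (α ⬝ᵥ w) * (b ⬝ᵥ z) - (b ⬝ᵥ β) * ((G *ᵥ w) ⬝ᵥ z)) by
    refine dotProduct_eq _ _ fun z => (h z).trans ?_
    simp only [smul_dotProduct, sub_dotProduct, add_dotProduct, smul_eq_mul]
  intro z
  -- `z ⬝ᵥ G *ᵥ (S x *ᵥ y)` is symmetric in `x, y`, and `hT` is its symmetrization in `y, z`, so the
  -- alternating sum of the cyclic instances of `hT` isolates one term, as in Koszul's formula.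
  have hwzβ := hT w z β
  have hzwβ := hT z w β
  have hβwz := hT β w z
  rw [hsymm z w] at hzwβ
  rw [hsymm β w, hsymm β z] at hβwz
  rw [← dotProduct_mulVec, dotProduct_comm (G *ᵥ w), ← hβ]
  simp only [dotProduct_comm (G *ᵥ β), ← hGcomm β]
  rw [one_div, eq_inv_mul_iff_mul_eq₀ (NeZero.ne 2)]
  linear_combination hwzβ + hzwβ - hβwz

theorem vbr_mup {E : VF n} {g : Met n} {u : OneForm n} {t : Pt n} {c : ℝ} (hg : IsMetricGerm g t)
    (hE : DifferentiableAt ℝ E t) (hu : DifferentiableAt ℝ u t)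
    (hconf : lieMet E g t = c • g t) :
    vbr E (mup g u) t = mup g (lieOne E u) t - c • mup g u t := by
  have hX : DifferentiableAt ℝ (mup g u) t := hg.differentiableAt_mup hu
  have hlower : (fun s => g s *ᵥ mup g u s) =ᶠ[𝓝 t] u :=
    hg.eventually.mono fun s hs => hs.mdown_mup u
  have hderiv := fderiv_mulVec hg.differentiableAt hX (E t)
  have hEg : fderiv ℝ g t (E t) = c • g t - ((jac E t)ᵀ * g t + g t * jac E t) := by
    rw [← hconf, lieMet_eq hE hg.differentiableAt]
    abel
  rw [hlower.fderiv_eq] at hderiv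
  have hlie : lieOne E u t = g t *ᵥ (vbr E (mup g u) t + c • mup g u t) := by
    rw [lieOne_eq hE hu, vbr_eq_lieBracket hE hX, hderiv, hEg, lieBracket, ← jac_mulVec E,
      ← mulVec_transpose (jac E t), ← hlower.self_of_nhds]
    simp only [sub_mulVec, add_mulVec, mulVec_add, mulVec_sub, ← mulVec_mulVec, smul_mulVec,
      mulVec_smul]
    abel
  rw [mup_eq g (lieOne E u), hlie, mulVec_mulVec, hg.inv_mul, one_mulVec, add_sub_cancel_right]

/-- `(L_E ∇)_X α`, where `∇` is the Levi-Civita connection of `g` acting on 1-forms. It is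
`C^∞`-linear in `α`, although none of its three terms is. -/
def lieCov (E : VF n) (g : Met n) (X : VF n) (α : OneForm n) : OneForm n := fun t =>
  lieOne E (covF g X α) t - covF g (vbr E X) α t - covF g X (lieOne E α) t

section LieCov

variable {E X : VF n} {g : Met n} {α : OneForm n} {t : Pt n}

theorem covF_eventuallyEq (hα : ContDiffAt ℝ 2 α t) :
    covF g X α =ᶠ[𝓝 t] fun s => fderiv ℝ α s (X s) - α s ᵥ* conn g s (X s) :=
  (hα.eventually (by simp)).mono fun _ hs => covF_eq (hs.differentiableAt two_ne_zero)

theorem lieOne_eventuallyEq (hE : ContDiffAt ℝ 2 E t) (hα : ContDiffAt ℝ 2 α t) :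
    lieOne E α =ᶠ[𝓝 t] fun s => fderiv ℝ α s (E s) + α s ᵥ* jac E s := by
  filter_upwards [hE.eventually (by simp), hα.eventually (by simp)] with s hEs hαs
  exact lieOne_eq (hEs.differentiableAt two_ne_zero) (hαs.differentiableAt two_ne_zero)

theorem differentiableAt_fderiv_apply (hα : ContDiffAt ℝ 2 α t) (hX : DifferentiableAt ℝ X t) :
    DifferentiableAt ℝ (fun s => fderiv ℝ α s (X s)) t :=
  (differentiableAt_fderiv hα).clm_apply hX

theorem differentiableAt_covF (hg : IsMetricGerm g t) (hX : DifferentiableAt ℝ X t)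
    (hα : ContDiffAt ℝ 2 α t) : DifferentiableAt ℝ (covF g X α) t :=
  ((differentiableAt_fderiv_apply hα hX).sub (differentiableAt_vecMul
    (hα.differentiableAt two_ne_zero) (hg.differentiableAt_conn hX))).congr_of_eventuallyEq
      (covF_eventuallyEq hα)

theorem differentiableAt_lieOne (hE : ContDiffAt ℝ 2 E t) (hα : ContDiffAt ℝ 2 α t) :
    DifferentiableAt ℝ (lieOne E α) t :=
  ((differentiableAt_fderiv_apply hα (hE.differentiableAt two_ne_zero)).add
    (differentiableAt_vecMul (hα.differentiableAt two_ne_zero)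
      (differentiableAt_jac hE))).congr_of_eventuallyEq (lieOne_eventuallyEq hE hα)

theorem fderiv_covF (hg : IsMetricGerm g t) (hX : DifferentiableAt ℝ X t)
    (hα : ContDiffAt ℝ 2 α t) (e : Pt n) :
    fderiv ℝ (covF g X α) t e
      = fderiv ℝ (fderiv ℝ α) t e (X t) + fderiv ℝ α t (fderiv ℝ X t e)
        - (fderiv ℝ α t e ᵥ* conn g t (X t)
          + α t ᵥ* (fderiv ℝ (fun s => conn g s (X t)) t e + conn g t (fderiv ℝ X t e))) := by
  have hα₁ := hα.differentiableAt two_ne_zero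
  have hC := hg.differentiableAt_conn hX
  rw [(covF_eventuallyEq hα).fderiv_eq, fderiv_fun_sub (differentiableAt_fderiv_apply hα hX)
    (differentiableAt_vecMul hα₁ hC), _root_.sub_apply, fderiv_fderiv_apply hα hX,
    fderiv_vecMul hα₁ hC, hg.fderiv_conn_apply hX]

theorem fderiv_lieOne (hE : ContDiffAt ℝ 2 E t) (hα : ContDiffAt ℝ 2 α t) (x : Pt n) :
    fderiv ℝ (lieOne E α) t x
      = fderiv ℝ (fderiv ℝ α) t x (E t) + fderiv ℝ α t (fderiv ℝ E t x)
        + (fderiv ℝ α t x ᵥ* jac E t + α t ᵥ* fderiv ℝ (jac E) t x) := by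
  have hE₁ := hE.differentiableAt two_ne_zero
  have hα₁ := hα.differentiableAt two_ne_zero
  have hJ := differentiableAt_jac hE
  rw [(lieOne_eventuallyEq hE hα).fderiv_eq, fderiv_fun_add (differentiableAt_fderiv_apply hα hE₁)
    (differentiableAt_vecMul hα₁ hJ), _root_.add_apply, fderiv_fderiv_apply hα hE₁,
    fderiv_vecMul hα₁ hJ]

theorem lieCov_eq_neg_vecMul (hg : IsMetricGerm g t) (hE : ContDiffAt ℝ 2 E t)
    (hX : DifferentiableAt ℝ X t) (hα : ContDiffAt ℝ 2 α t) :
    lieCov E g X α t = -(α t ᵥ* lieConn E g t (X t)) := by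
  have hE₁ := hE.differentiableAt two_ne_zero
  have hα₁ := hα.differentiableAt two_ne_zero
  have hsymm : fderiv ℝ (fderiv ℝ α) t (E t) (X t) = fderiv ℝ (fderiv ℝ α) t (X t) (E t) :=
    (hα.isSymmSndFDerivAt (by simp)).eq _ _
  rw [lieCov, lieOne_eq hE₁ (differentiableAt_covF hg hX hα), covF_eq hα₁, covF_eq hα₁,
    covF_eq (differentiableAt_lieOne hE hα), fderiv_covF hg hX hα, fderiv_lieOne hE hα,
    lieOne_eq hE₁ hα₁, vbr_eq_lieBracket hE₁ hX, hsymm]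
  simp only [lieConn, lieBracket, jac_mulVec, map_sub, vecMul_add, add_vecMul, vecMul_sub,
    sub_vecMul, ← vecMul_vecMul]
  abel

end LieCov

/-- The differential `dφ` of a function `φ`, as a 1-form. -/
def dFun (φ : Pt n → ℝ) : OneForm n := fun s i => pder i φ s

theorem dFun_dotProduct (φ : Pt n → ℝ) (t w : Pt n) : dFun φ t ⬝ᵥ w = fderiv ℝ φ t w := by
  rw [dotProduct_comm, ← sum_mul_pder]
  rfl

theorem dFun_sub {φ ψ : Pt n → ℝ} {t : Pt n} (hφ : DifferentiableAt ℝ φ t)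
    (hψ : DifferentiableAt ℝ ψ t) : dFun (fun s => φ s - ψ s) t = dFun φ t - dFun ψ t := by
  ext i
  simp [dFun, pder, fderiv_fun_sub hφ hψ]

theorem lieCov_of_conformal {E X : VF n} {g : Met n} {D : Pt n → ℝ} {α : OneForm n} {t : Pt n}
    (hg : IsMetricGerm g t) (hE : ContDiffAt ℝ 2 E t) (hD : DifferentiableAt ℝ D t)
    (hconf : ∀ᶠ s in 𝓝 t, lieMet E g s = D s • g s) (hX : DifferentiableAt ℝ X t)
    (hα : ContDiffAt ℝ 2 α t) :
    lieCov E g X α t = (1 / 2 : ℝ) • (mup2 g α (dFun D) t • mdown g X t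
      - (dFun D t ⬝ᵥ X t) • α t - (α t ⬝ᵥ X t) • dFun D t) := by
  rw [lieCov_eq_neg_vecMul hg hE hX hα,
    vecMul_eq_of_transpose_mul_add_mul hg.isSymm hg.isUnit (lieConn_mulVec_comm hg hE) fun w => by
      rw [dFun_dotProduct, transpose_lieConn_mul_add_mul_lieConn hg hE hD hconf w],
    hg.mup2_comm, mup2_eq, mup_eq, mdown_eq, ← smul_neg]
  congr 1
  abel

theorem covF_of_eq_sub_smul {g : Met n} {X Y Z : VF n} {α : OneForm n} {t : Pt n} {c : ℝ}
    (hα : DifferentiableAt ℝ α t) (h : X t = Y t - c • Z t) :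
    covF g X α t = covF g Y α t - c • covF g Z α t := by
  simp only [covF_eq hα, h, map_sub, map_smul, vecMul_sub, vecMul_smul]
  module

theorem circM_eq (g g' : Met n) (u v : OneForm n) :
    circM g g' u v = fun s => covF g (mup g u) v s - covF g' (mup g u) v s := rfl

theorem lieOne_fun_sub {E : VF n} {α β : OneForm n} {t : Pt n} (hE : DifferentiableAt ℝ E t)
    (hα : DifferentiableAt ℝ α t) (hβ : DifferentiableAt ℝ β t) :
    lieOne E (fun s => α s - β s) t = lieOne E α t - lieOne E β t := by
  rw [lieOne_eq hE (hα.fun_sub hβ), lieOne_eq hE hα, lieOne_eq hE hβ, fderiv_fun_sub hα hβ,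
    _root_.sub_apply, sub_vecMul]
  abel

theorem lieCirc_eq_lieCov {E : VF n} {g g' : Met n} {u v : OneForm n} {t : Pt n} {c : ℝ}
    (hg : IsMetricGerm g t) (hg' : IsMetricGerm g' t) (hE : DifferentiableAt ℝ E t)
    (hconf : lieMet E g t = c • g t) (hu : DifferentiableAt ℝ u t) (hv : ContDiffAt ℝ 2 v t) :
    lieCirc E g g' u v t
      = lieCov E g (mup g u) v t - lieCov E g' (mup g u) v t - c • circM g g' u v t := by
  have hX : DifferentiableAt ℝ (mup g u) t := hg.differentiableAt_mup hu
  have hcov (k : Met n) : covF k (vbr E (mup g u)) v t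
      = covF k (mup g (lieOne E u)) v t - c • covF k (mup g u) v t :=
    covF_of_eq_sub_smul (hv.differentiableAt two_ne_zero) (vbr_mup hg hE hu hconf)
  have hlie : lieCirc E g g' u v t = lieOne E (circM g g' u v) t
      - circM g g' (lieOne E u) v t - circM g g' u (lieOne E v) t := rfl
  simp only [hlie, lieCov, hcov, circM_eq,
    lieOne_fun_sub hE (differentiableAt_covF hg hX hv) (differentiableAt_covF hg' hX hv)]
  module

theorem stmt19_general {h h' : Met n} {E : VF n} {D Dt : Pt n → ℝ} {u v : OneForm n} {t : Pt n}
    (hh : IsMetricGerm h t) (hh' : IsMetricGerm h' t) (hE : ContDiffAt ℝ 2 E t)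
    (hD : DifferentiableAt ℝ D t) (hDt : DifferentiableAt ℝ Dt t)
    (hlieh : ∀ᶠ s in 𝓝 t, lieMet E h s = D s • h s)
    (hlieh' : ∀ᶠ s in 𝓝 t, lieMet E h' s = Dt s • h' s)
    (hu : DifferentiableAt ℝ u t) (hv : ContDiffAt ℝ 2 v t) :
    lieCirc E h h' u v t
      = (1 / 2 : ℝ) • (mup2 h u (dFun fun s => Dt s - D s) t • v t
          + mup2 h u v t • dFun (fun s => Dt s - D s) t
          + mup2 h v (dFun D) t • u t
          - mup2 h' v (dFun Dt) t • mdown h' (mup h u) t)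
        - D t • circM h h' u v t := by
  have hX : DifferentiableAt ℝ (mup h u) t := hh.differentiableAt_mup hu
  have hpair (α : OneForm n) : α t ⬝ᵥ mup h u t = mup2 h u α t := by rw [hh.mup2_comm, mup2_eq]
  have hdlam : mup2 h u (dFun fun s => Dt s - D s) t
      = mup2 h u (dFun Dt) t - mup2 h u (dFun D) t := by
    simp only [← hpair, dFun_sub hDt hD, sub_dotProduct]
  rw [lieCirc_eq_lieCov hh hh' (hE.differentiableAt two_ne_zero) hlieh.self_of_nhds hu hv,
    lieCov_of_conformal hh hE hD hlieh hX hv, lieCov_of_conformal hh' hE hDt hlieh' hX hv,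
    hh.mdown_mup, hpair, hpair, hpair, hdlam, dFun_sub hDt hD]
  module

end

/-- If L_E h = D h and L_E h̃ = D̃ h̃, then with λ = D̃ − D,
L_E(∘)(u,v) = ½[h*(u,dλ) v + h*(u,v) dλ + h*(v,dD) u − h̃*(v,dD̃) h̃(h*u)] − D (u∘v). -/
theorem stmt19 {n : ℕ} (U : Set (Pt n)) (hUopen : IsOpen U) (hUne : U.Nonempty)
    (h h' : Met n) (hmet : IsMetricOn U h) (hmet' : IsMetricOn U h')
    (E : VF n) (hE : SmoothVF U E)
    (D Dt : Pt n → ℝ) (hD : ContDiffOn ℝ (⊤ : ℕ∞) D U) (hDt : ContDiffOn ℝ (⊤ : ℕ∞) Dt U)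
    (hlieh : ∀ t ∈ U, ∀ i j, lieMet E h t i j = D t * h t i j)
    (hlieh' : ∀ t ∈ U, ∀ i j, lieMet E h' t i j = Dt t * h' t i j) :
    ∀ u v : OneForm n, SmoothVF U u → SmoothVF U v → ∀ t ∈ U, ∀ a,
      lieCirc E h h' u v t a
        = (1/2) * (mup2 h u (fun s i => pder i (fun x => Dt x - D x) s) t * v t a
            + mup2 h u v t * pder a (fun x => Dt x - D x) t
            + mup2 h v (fun s i => pder i D s) t * u t a
            - mup2 h' v (fun s i => pder i Dt s) t * mdown h' (mup h u) t a)
          - D t * circM h h' u v t a := by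
  intro u v hu hv t ht a
  have hU : U ∈ nhds t := hUopen.mem_nhds ht
  have hC2 {X : Pt n → Fin n → ℝ} (hX : SmoothVF U X) : ContDiffAt ℝ 2 X t :=
    contDiffAt_pi.2 fun k => ((hX k).contDiffAt hU).of_le (WithTop.coe_le_coe.2 le_top)
  have hC1 {φ : Pt n → ℝ} (hφ : ContDiffOn ℝ (⊤ : ℕ∞) φ U) : DifferentiableAt ℝ φ t :=
    (hφ.contDiffAt hU).differentiableAt (by simp)
  exact congrFun (stmt19_general (hmet.germ hU) (hmet'.germ hU) (hC2 hE) (hC1 hD) (hC1 hDt)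
    (Filter.eventually_of_mem hU fun s hs => Matrix.ext (hlieh s hs))
    (Filter.eventually_of_mem hU fun s hs => Matrix.ext (hlieh' s hs))
    ((hC2 hu).differentiableAt two_ne_zero) (hC2 hv)) a
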